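/- Let q ≥ 3 be a prime power and B ≥ 2 a real constant. There exists a constant C = C(q, B) such that for all integers n ≥ 2 and all integers k with 1 ≤ k ≤ n/B, writing Y = log(n−k), one has Σ_{j integer, e·q·Y < j ≤ k} C(q−1+k−j, q−1) · N'(n+j−k, j) ≤ C · q^{n−k} · (n−k)^{q−2}, where C(·,·) denotes a binomial coefficient and e is Euler's number. -/

import Mathlib

open Polynomial

/-- Number of monic irreducible factors counted with multiplicity. -/
noncomputable def Omega {F : Type*} [Field F] (f : F[X]) : ℕ :=
  (UniqueFactorizationMonoid.factors f).card

/-- `Ncount' F n k` = number of monic polynomials of degree `n` over `F` with no root in `F`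
and with `Omega f = k`. -/
noncomputable def Ncount' (F : Type*) [Field F] (n k : ℕ) : ℕ :=
  Set.ncard {f : F[X] | f.Monic ∧ f.natDegree = n ∧ (∀ a : F, f.eval a ≠ 0) ∧ Omega f = k}

noncomputable def rise (a : ℝ) (m : ℕ) : ℝ := ∏ i ∈ Finset.range m, (a + i) / (i + 1)

lemma rise_succ (a : ℝ) (m : ℕ) : ((m : ℝ) + 1) * rise a (m + 1) = (a + m) * rise a m := by
  unfold rise
  rw [Finset.prod_range_succ]
  have : (m : ℝ) + 1 ≠ 0 := by positivity
  field_simp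

lemma rise_nonneg {a : ℝ} (ha : 0 ≤ a) (m : ℕ) : 0 ≤ rise a m := by
  unfold rise
  exact Finset.prod_nonneg fun i _ => by positivity

lemma rise_sum (a : ℝ) (m : ℕ) :
    a * ∑ i ∈ Finset.range (m + 1), rise a i = ((m : ℝ) + 1) * rise a (m + 1) := by
  induction m with
  | zero => simp [rise]
  | succ m ih =>
    rw [Finset.sum_range_succ, mul_add, ih]
    have := rise_succ a (m + 1)
    push_cast at *
    linarith

lemma rise_mono {a : ℝ} (ha : 1 ≤ a) : Monotone (rise a) := by
  apply monotone_nat_of_le_succ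
  intro m
  have h := rise_succ a m
  have h0 := rise_nonneg (by linarith : 0 ≤ a) m
  have hm : (0 : ℝ) < (m : ℝ) + 1 := by positivity
  have : ((m : ℝ) + 1) * rise a m ≤ ((m : ℝ) + 1) * rise a (m + 1) := by
    rw [h]; gcongr ?_ * _; linarith
  exact le_of_mul_le_mul_left this hm

lemma rise_le {a : ℝ} (ha : 2 ≤ a) (m : ℕ) : rise a (m + 1) ≤ a * ((m + 1 : ℕ) : ℝ) ^ (a - 1) := by
  induction m with
  | zero => simp [rise]
  | succ m ih =>
    have h := rise_succ a (m + 1)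
    have h0 := rise_nonneg (by linarith : 0 ≤ a) (m + 1)
    have hm : (0 : ℝ) < (m : ℝ) + 1 := by positivity
    have hb := one_add_mul_self_le_rpow_one_add (s := 1 / ((m : ℝ) + 1))
      (by have : 0 ≤ 1 / ((m : ℝ) + 1) := by positivity
          linarith) (p := a - 1) (by linarith)
    have e1 : rise a (m + 1 + 1) = (1 + (a - 1) / ((m : ℝ) + 2)) * rise a (m + 1) := by
      push_cast at h
      field_simp
      linarith
    have e2 : (1 + (a - 1) / ((m : ℝ) + 2)) ≤ (1 + 1 / ((m : ℝ) + 1)) ^ (a - 1) := by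
      refine le_trans ?_ hb
      have : (a - 1) / ((m : ℝ) + 2) ≤ (a - 1) / ((m : ℝ) + 1) := by
        apply div_le_div_of_nonneg_left <;> linarith
      have e : (a - 1) * (1 / ((m : ℝ) + 1)) = (a - 1) / ((m : ℝ) + 1) := by ring
      linarith
    have e3 : (((m + 1 + 1 : ℕ) : ℝ)) ^ (a - 1) =
        (1 + 1 / ((m : ℝ) + 1)) ^ (a - 1) * ((m + 1 : ℕ) : ℝ) ^ (a - 1) := by
      rw [← Real.mul_rpow (by positivity) (by positivity)]
      congr 1
      push_cast
      field_simp
    rw [e1, e3]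
    calc _ ≤ (1 + 1 / ((m : ℝ) + 1)) ^ (a - 1) * (a * ((m + 1 : ℕ) : ℝ) ^ (a - 1)) := by gcongr
      _ = _ := by ring

noncomputable def RS (a ρ : ℝ) : PowerSeries ℝ := PowerSeries.mk fun m => rise a m * ρ ^ m

lemma RS_deriv (a ρ : ℝ) :
    PowerSeries.derivative ℝ (RS a ρ) = (PowerSeries.mk fun l => a * ρ ^ (l + 1)) * RS a ρ := by
  ext m
  rw [PowerSeries.coeff_derivative, PowerSeries.coeff_mul]
  simp only [RS, PowerSeries.coeff_mk]
  have : ∀ p ∈ Finset.HasAntidiagonal.antidiagonal m, a * ρ ^ (p.1 + 1) * (rise a p.2 * ρ ^ p.2) =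
      a * ρ ^ (m + 1) * rise a p.2 := by
    intro p hp
    rw [Finset.HasAntidiagonal.mem_antidiagonal] at hp
    rw [← hp]; ring
  rw [Finset.sum_congr rfl this, ← Finset.mul_sum,
    Finset.Nat.sum_antidiagonal_eq_sum_range_succ_mk]
  rw [← Finset.sum_range_reflect] 
  have e : ∑ j ∈ Finset.range (m.succ), rise a (m - (m.succ - 1 - j)) =
      ∑ j ∈ Finset.range (m + 1), rise a j := by
    apply Finset.sum_congr rfl
    intro j hj
    rw [Finset.mem_range] at hj
    congr 1; omega
  simp only at e ⊢
  rw [e]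
  have := rise_sum a m
  linear_combination (-ρ ^ (m + 1)) * this

lemma summable_rise {c ρ : ℝ} (hc : 0 < c) (hρ : 0 < ρ) (hρ1 : ρ < 1) :
    Summable fun m => rise c m * ρ ^ m := by
  have hpos : ∀ m, 0 < rise c m := fun m => Finset.prod_pos fun i _ => by positivity
  apply summable_of_ratio_test_tendsto_lt_one hρ1
  · exact Filter.Eventually.of_forall fun m => by have := hpos m; positivity
  · have h : ∀ m : ℕ, ‖rise c (m + 1) * ρ ^ (m + 1)‖ / ‖rise c m * ρ ^ m‖ =
        (1 + (c - 1) * (1 / ((m : ℝ) + 1))) * ρ := by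
      intro m
      have h1 := hpos m
      have h2 := hpos (m + 1)
      rw [Real.norm_of_nonneg (by positivity), Real.norm_of_nonneg (by positivity)]
      have := rise_succ c m
      have : rise c (m + 1) = (c + m) / (m + 1) * rise c m := by
        field_simp; linarith
      rw [this]
      field_simp
      ring
    simp_rw [h]
    have := ((tendsto_one_div_add_atTop_nhds_zero_nat (𝕜 := ℝ)).const_mul (c - 1)).const_add 1
    simpa using this.mul_const ρ

lemma analytic_bound (A : ℕ → ℝ) (hA0 : A 0 ≤ 1) {α c ρ : ℝ} (hα : 2 ≤ α)
    (hc : 0 < c) (hρ : 0 < ρ) (hρ1 : ρ < 1)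
    (hrec : ∀ m : ℕ, ((m : ℝ) + 1) * A (m + 1) ≤
      ∑ p ∈ Finset.HasAntidiagonal.antidiagonal m, (α + c * ρ ^ (p.1 + 1)) * A p.2) :
    ∃ K : ℝ, 0 ≤ K ∧ ∀ m : ℕ, 1 ≤ m → A m ≤ K * (m : ℝ) ^ (α - 1) := by
  obtain ⟨G, hG⟩ : ∃ G, G = RS α 1 * RS c ρ := ⟨_, rfl⟩
  have hder : PowerSeries.derivative ℝ G = (PowerSeries.mk fun l => (α + c * ρ ^ (l + 1))) * G := by
    have : (PowerSeries.mk fun l => (α + c * ρ ^ (l + 1))) =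
        (PowerSeries.mk fun l => α * 1 ^ (l + 1)) + (PowerSeries.mk fun l => c * ρ ^ (l + 1)) := by
      ext l; simp
    rw [this, hG, Derivation.leibniz, RS_deriv, RS_deriv]
    simp only [smul_eq_mul]
    ring
  have hle : ∀ m, A m ≤ PowerSeries.coeff m G := by
    intro m
    induction m using Nat.strong_induction_on with
    | _ m ih =>
      rcases m with _ | m
      · simpa [hG, PowerSeries.coeff_mul, RS, rise] using hA0
      · have h1 := congrArg (PowerSeries.coeff m) hder
        rw [PowerSeries.coeff_derivative, PowerSeries.coeff_mul] at h1
        simp only [PowerSeries.coeff_mk] at h1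
        have h2 : ((m : ℝ) + 1) * A (m + 1) ≤ ((m : ℝ) + 1) * PowerSeries.coeff (m + 1) G := by
          refine (hrec m).trans ?_
          rw [mul_comm, h1]
          apply Finset.sum_le_sum
          intro p hp
          rw [Finset.HasAntidiagonal.mem_antidiagonal] at hp
          gcongr
          exact ih _ (by omega)
        exact le_of_mul_le_mul_left h2 (by positivity)
  have hs := summable_rise hc hρ hρ1
  set S := ∑' m, rise c m * ρ ^ m with hS
  have hnn : ∀ m, 0 ≤ rise c m * ρ ^ m := fun m => mul_nonneg (rise_nonneg hc.le m) (by positivity)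
  have hS0 : 0 ≤ S := tsum_nonneg hnn
  refine ⟨S * α, by positivity, fun m hm => (hle m).trans ?_⟩
  obtain ⟨m, rfl⟩ : ∃ m', m = m' + 1 := ⟨m - 1, by omega⟩
  rw [hG, PowerSeries.coeff_mul]
  simp only [RS, PowerSeries.coeff_mk, one_pow, mul_one]
  calc _ ≤ ∑ p ∈ Finset.HasAntidiagonal.antidiagonal (m + 1), rise α (m + 1) * (rise c p.2 * ρ ^ p.2) := by
        apply Finset.sum_le_sum
        intro p hp
        rw [Finset.HasAntidiagonal.mem_antidiagonal] at hp
        exact mul_le_mul_of_nonneg_right (rise_mono (by linarith) (by omega)) (hnn _)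
    _ = rise α (m + 1) * ∑ p ∈ Finset.range (m + 2), (rise c p * ρ ^ p) := by
        rw [← Finset.mul_sum, Finset.Nat.antidiagonal_eq_map', Finset.sum_map]
        rfl
    _ ≤ rise α (m + 1) * S := by
        gcongr
        · exact rise_nonneg (by linarith) _
        · exact hs.sum_le_tsum _ fun i _ => hnn i
    _ ≤ (α * ((m + 1 : ℕ) : ℝ) ^ (α - 1)) * S := by
        gcongr; exact rise_le hα m
    _ = _ := by ring

open Classical in
lemma Omega_eq {F : Type*} [Field F] (f : F[X]) :
    Omega f = (UniqueFactorizationMonoid.normalizedFactors f).card := by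
  simp [Omega, UniqueFactorizationMonoid.normalizedFactors]

open Classical in
lemma Omega_pow_mul {F : Type*} [Field F] {P g : F[X]} (hP : Irreducible P) (hg : g ≠ 0) (r : ℕ) :
    Omega (P ^ r * g) = r + Omega g := by
  rw [Omega_eq, Omega_eq, UniqueFactorizationMonoid.normalizedFactors_mul (pow_ne_zero _ hP.ne_zero) hg,
    UniqueFactorizationMonoid.normalizedFactors_of_irreducible_pow hP]
  simp

lemma finite_natDegree_le (F : Type*) [Field F] [Fintype F] (n : ℕ) :
    {f : F[X] | f.natDegree ≤ n}.Finite := by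
  have : Finite (degreeLT F (n + 1)) := Finite.of_equiv _ (degreeLTEquiv F (n + 1)).symm.toEquiv
  refine (Set.toFinite (degreeLT F (n + 1) : Set F[X])).subset ?_
  intro f hf
  simp only [SetLike.mem_coe, mem_degreeLT]
  simp only [Set.mem_ofPred_eq] at hf
  exact lt_of_le_of_lt degree_le_natDegree (by exact_mod_cast Nat.lt_succ_of_le hf)

open Classical in
lemma natDegree_eq_sum {F : Type*} [Field F] {f : F[X]} (hf : f.Monic) :
    f.natDegree = ((UniqueFactorizationMonoid.normalizedFactors f).map natDegree).sum := by
  have h := leadingCoeff_mul_prod_normalizedFactors f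
  rw [hf.leadingCoeff, C_1, one_mul] at h
  conv_lhs => rw [← h]
  apply natDegree_multiset_prod_of_monic
  intro P hP
  exact ((Polynomial.mem_normalizedFactors_iff hf.ne_zero).1 hP).2.1

lemma two_le_natDegree {F : Type*} [Field F] {f P : F[X]} (hf : ∀ a : F, f.eval a ≠ 0)
    (hP : Irreducible P) (hd : P ∣ f) : 2 ≤ P.natDegree := by
  have h1 := hP.natDegree_pos
  by_contra hlt
  have h : P.natDegree = 1 := by omega
  obtain ⟨a, ha⟩ := exists_root_of_degree_eq_one ((degree_eq_iff_natDegree_eq_of_pos one_pos).2 h)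
  exact hf a ((ha.dvd hd))

open Classical in
/-- degree minus Omega as a sum over prime factors -/
lemma Omega_add_sum {F : Type*} [Field F] {f : F[X]} (hf : f.Monic) 
    (hr : ∀ a : F, f.eval a ≠ 0) :
    f.natDegree = Omega f +
      ((UniqueFactorizationMonoid.normalizedFactors f).map (fun P => natDegree P - 1)).sum := by
  rw [natDegree_eq_sum hf, Omega_eq, ← mul_one (Multiset.card _), ← smul_eq_mul,
    ← Multiset.sum_replicate, ← Multiset.map_const', ← Multiset.sum_map_add]
  congr 1
  apply Multiset.map_congr rfl
  intro P hP
  have hP' := (Polynomial.mem_normalizedFactors_iff hf.ne_zero).1 hP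
  have := two_le_natDegree hr hP'.1 hP'.2.2
  omega

/-- monic, no roots, degree minus Omega equal to m -/
def SS (F : Type*) [Field F] (m : ℕ) : Set F[X] :=
  {f : F[X] | f.Monic ∧ (∀ a : F, f.eval a ≠ 0) ∧ f.natDegree = Omega f + m}

open Classical in
lemma SS_natDegree_le {F : Type*} [Field F] {m : ℕ} {f : F[X]} (hf : f ∈ SS F m) :
    f.natDegree ≤ 2 * m := by
  obtain ⟨h1, h2, h3⟩ := hf
  have h4 := Omega_add_sum h1 h2
  have h5 : Omega f ≤ 
      ((UniqueFactorizationMonoid.normalizedFactors f).map (fun P => natDegree P - 1)).sum := by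
    rw [Omega_eq, ← mul_one (Multiset.card _), ← smul_eq_mul,
      ← Multiset.sum_replicate, ← Multiset.map_const']
    apply Multiset.sum_map_le_sum_map
    intro P hP
    have hP' := (Polynomial.mem_normalizedFactors_iff h1.ne_zero).1 hP
    have := two_le_natDegree h2 hP'.1 hP'.2.2
    omega
  omega

lemma SS_finite (F : Type*) [Field F] [Fintype F] (m : ℕ) : (SS F m).Finite :=
  (finite_natDegree_le F (2 * m)).subset fun _ hf => SS_natDegree_le hf

noncomputable def SF (F : Type*) [Field F] [Fintype F] (m : ℕ) : Finset F[X] :=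
  (SS_finite F m).toFinset

noncomputable def aa (F : Type*) [Field F] [Fintype F] (z : ℝ) (m : ℕ) : ℝ :=
  ∑ f ∈ SF F m, z ^ Omega f

/-- monic irreducible polynomials of degree between 2 and m+1 -/
lemma irr_finite (F : Type*) [Field F] [Fintype F] (m : ℕ) :
    {P : F[X] | P.Monic ∧ Irreducible P ∧ 2 ≤ P.natDegree ∧ P.natDegree ≤ m + 1}.Finite :=
  (finite_natDegree_le F (m + 1)).subset fun _ h => h.2.2.2

noncomputable def IF (F : Type*) [Field F] [Fintype F] (m : ℕ) : Finset F[X] :=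
  (irr_finite F m).toFinset

open Classical in
lemma card_irr (F : Type*) [Field F] [Fintype F] (m s : ℕ) (hs : 1 ≤ s) :
    s * ((IF F m).filter fun P => P.natDegree - 1 = s).card ≤ Fintype.card F ^ (s + 1) := by
  set T := (IF F m).filter fun P => P.natDegree - 1 = s
  have hT : ∀ P ∈ T, P.Monic ∧ Irreducible P ∧ P.natDegree = s + 1 := by
    intro P hP
    simp only [T, IF, Finset.mem_filter, Set.Finite.mem_toFinset, Set.mem_ofPred_eq] at hP
    exact ⟨hP.1.1, hP.1.2.1, by omega⟩
  have hd : ∏ P ∈ T, P ∣ (X ^ (Fintype.card F) ^ (s + 1) - X : F[X]) := by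
    apply Finset.prod_dvd_of_coprime
    · intro P hP Q hQ hne
      have h1 := hT P hP
      have h2 := hT Q hQ
      apply (h1.2.1.coprime_iff_not_dvd).2
      intro hdv
      exact hne (eq_of_monic_of_associated h1.1 h2.1 (h1.2.1.associated_of_dvd h2.2.1 hdv))
    · intro P hP
      have h1 := hT P hP
      rw [Fintype.card_eq_nat_card, ← h1.2.2]
      exact h1.2.1.natDegree_dvd_iff_dvd_X_pow_card_pow_sub_X.1 dvd_rfl
  have hle := natDegree_le_of_dvd hd
    (FiniteField.X_pow_card_pow_sub_X_ne_zero F (by omega) Fintype.one_lt_card)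
  rw [FiniteField.X_pow_card_pow_sub_X_natDegree_eq F (by omega) Fintype.one_lt_card,
    natDegree_prod_of_monic _ _ (fun P hP => (hT P hP).1),
    Finset.sum_congr rfl (fun P hP => (hT P hP).2.2), Finset.sum_const, smul_eq_mul] at hle
  nlinarith

open Classical in
lemma m_le_sum {F : Type*} [Field F] [Fintype F] {m : ℕ} {f : F[X]} (hf : f ∈ SF F m) :
    m ≤ ∑ P ∈ IF F m, ∑ r ∈ Finset.Icc 1 m, if P ^ r ∣ f then P.natDegree - 1 else 0 := by
  simp only [SF, Set.Finite.mem_toFinset] at hf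
  obtain ⟨h1, h2, h3⟩ := hf
  have h4 := Omega_add_sum h1 h2
  have h5 : m = ((UniqueFactorizationMonoid.normalizedFactors f).map
    (fun P => natDegree P - 1)).sum := by omega
  set N := UniqueFactorizationMonoid.normalizedFactors f with hN
  have hmem : ∀ P ∈ N, Irreducible P ∧ P.Monic ∧ P ∣ f := fun P hP =>
    (Polynomial.mem_normalizedFactors_iff h1.ne_zero).1 hP
  rw [Finset.sum_multiset_map_count] at h5
  have hb : ∀ P ∈ N.toFinset, N.count P * (P.natDegree - 1) ≤ m := by
    intro P hP
    rw [h5]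
    simp only [smul_eq_mul]
    exact Finset.single_le_sum (f := fun P => N.count P * (P.natDegree - 1))
      (fun _ _ => Nat.zero_le _) hP
  have hsub : N.toFinset ⊆ IF F m := by
    intro P hP
    have hP' := Multiset.mem_toFinset.1 hP
    have h := hmem P hP'
    have h6 := two_le_natDegree h2 h.1 h.2.2
    have h7 := hb P hP
    have h8 : 1 ≤ N.count P := Multiset.one_le_count_iff_mem.2 hP'
    simp only [IF, Set.Finite.mem_toFinset, Set.mem_ofPred_eq]
    refine ⟨h.2.1, h.1, h6, ?_⟩
    have : P.natDegree - 1 ≤ m := le_trans (Nat.le_mul_of_pos_left _ h8) h7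
    omega
  calc m = ∑ P ∈ N.toFinset, N.count P • (P.natDegree - 1) := h5
    _ ≤ ∑ P ∈ N.toFinset, ∑ r ∈ Finset.Icc 1 m, if P ^ r ∣ f then P.natDegree - 1 else 0 := by
      apply Finset.sum_le_sum
      intro P hP
      have hP' := Multiset.mem_toFinset.1 hP
      have h := hmem P hP'
      have h6 := two_le_natDegree h2 h.1 h.2.2
      have h7 := hb P hP
      have h8 : N.count P ≤ m := le_trans (Nat.le_mul_of_pos_right _ (by omega)) h7
      have hdv : P ^ (N.count P) ∣ f := by
        have e := leadingCoeff_mul_prod_normalizedFactors f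
        rw [h1.leadingCoeff, C_1, one_mul] at e
        rw [← e, ← Multiset.prod_replicate]
        apply Multiset.prod_dvd_prod_of_le
        exact Multiset.le_count_iff_replicate_le.1 le_rfl
      calc N.count P • (P.natDegree - 1) 
          = ∑ r ∈ Finset.Icc 1 (N.count P), (P.natDegree - 1) := by simp
        _ = ∑ r ∈ Finset.Icc 1 (N.count P), if P ^ r ∣ f then P.natDegree - 1 else 0 := by
          apply Finset.sum_congr rfl
          intro r hr
          rw [if_pos ((pow_dvd_pow P (Finset.mem_Icc.1 hr).2).trans hdv)]
        _ ≤ _ := Finset.sum_le_sum_of_subset (Finset.Icc_subset_Icc le_rfl h8)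
    _ ≤ _ := Finset.sum_le_sum_of_subset hsub

open Classical in
lemma sum_dvd_le {F : Type*} [Field F] [Fintype F] {z : ℝ} (hz : 0 ≤ z) {m r : ℕ} {P : F[X]}
    (hP : P ∈ IF F m) :
    ∑ f ∈ (SF F m).filter (fun f => P ^ r ∣ f), z ^ Omega f ≤
      if (P.natDegree - 1) * r ≤ m then z ^ r * aa F z (m - (P.natDegree - 1) * r) else 0 := by
  simp only [IF, Set.Finite.mem_toFinset, Set.mem_ofPred_eq] at hP
  obtain ⟨hPm, hPi, hP2, -⟩ := hP
  have key : ∀ f ∈ (SF F m).filter (fun f => P ^ r ∣ f),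
      (P.natDegree - 1) * r ≤ m ∧ ∃ g ∈ SF F (m - (P.natDegree - 1) * r), P ^ r * g = f := by
    intro f hf
    simp only [SF, Finset.mem_filter, Set.Finite.mem_toFinset] at hf
    obtain ⟨⟨h1, h2, h3⟩, g, rfl⟩ := hf
    have hgm : g.Monic := (hPm.pow r).of_mul_monic_left h1
    have hgr : ∀ a : F, g.eval a ≠ 0 := by
      intro a ha
      apply h2 a
      simp [ha]
    have h4 := Omega_add_sum hgm hgr
    rw [Omega_pow_mul hPi hgm.ne_zero, (hPm.pow r).natDegree_mul hgm, hPm.natDegree_pow] at h3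
    obtain ⟨d, hd⟩ : ∃ d, P.natDegree = d + 1 := ⟨P.natDegree - 1, by omega⟩
    rw [hd] at h3 ⊢
    simp only [Nat.add_sub_cancel]
    have : r * (d + 1) = d * r + r := by ring
    refine ⟨by omega, g, ?_, rfl⟩
    simp only [SF, Set.Finite.mem_toFinset]
    exact ⟨hgm, hgr, by omega⟩
  split_ifs with hle
  · calc _ ≤ ∑ f ∈ (SF F (m - (P.natDegree - 1) * r)).image (fun g => P ^ r * g), z ^ Omega f := by
          apply Finset.sum_le_sum_of_subset_of_nonneg
          · intro f hf
            obtain ⟨g, hg, e⟩ := (key f hf).2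
            exact Finset.mem_image.2 ⟨g, hg, e⟩
          · intro f _ _
            positivity
      _ = ∑ g ∈ SF F (m - (P.natDegree - 1) * r), z ^ Omega (P ^ r * g) := by
          apply Finset.sum_image
          intro a _ b _ hab
          exact mul_left_cancel₀ (pow_ne_zero r hPi.ne_zero) hab
      _ = _ := by
          rw [aa, Finset.mul_sum]
          apply Finset.sum_congr rfl
          intro g hg
          simp only [SF, Set.Finite.mem_toFinset] at hg
          rw [Omega_pow_mul hPi hg.1.ne_zero, pow_add]
  · rw [Finset.filter_eq_empty_iff.2]
    · simp
    · intro f hf hd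
      exact hle (key f (Finset.mem_filter.2 ⟨hf, hd⟩)).1

lemma aa_nonneg (F : Type*) [Field F] [Fintype F] {z : ℝ} (hz : 0 ≤ z) (m : ℕ) : 0 ≤ aa F z m :=
  Finset.sum_nonneg fun _ _ => by positivity

open Classical in
lemma aa_rec (F : Type*) [Field F] [Fintype F] {z : ℝ} (hz : 0 ≤ z) (m : ℕ) :
    (m : ℝ) * aa F z m ≤ ∑ s ∈ Finset.Icc 1 m, ∑ r ∈ Finset.Icc 1 m,
      if s * r ≤ m then (Fintype.card F : ℝ) ^ (s + 1) * (z ^ r * aa F z (m - s * r)) else 0 := by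
  set h : ℕ → ℕ → ℝ := fun s r => if s * r ≤ m then z ^ r * aa F z (m - s * r) else 0 with hh
  have hh0 : ∀ s r, 0 ≤ h s r := by
    intro s r
    simp only [hh]
    have := aa_nonneg F hz (m - s * r)
    split_ifs <;> positivity
  calc (m : ℝ) * aa F z m = ∑ f ∈ SF F m, (m : ℝ) * z ^ Omega f := by rw [aa, Finset.mul_sum]
    _ ≤ ∑ f ∈ SF F m, ∑ P ∈ IF F m, ∑ r ∈ Finset.Icc 1 m,
          if P ^ r ∣ f then ((P.natDegree - 1 : ℕ) : ℝ) * z ^ Omega f else 0 := by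
        apply Finset.sum_le_sum
        intro f hf
        have h1 : (m : ℝ) ≤ ∑ P ∈ IF F m, ∑ r ∈ Finset.Icc 1 m,
            if P ^ r ∣ f then ((P.natDegree - 1 : ℕ) : ℝ) else 0 := by
          have := m_le_sum hf
          exact_mod_cast this
        refine (mul_le_mul_of_nonneg_right h1 (by positivity)).trans (le_of_eq ?_)
        simp_rw [Finset.sum_mul, ite_mul, zero_mul]
    _ = ∑ P ∈ IF F m, ∑ r ∈ Finset.Icc 1 m, ((P.natDegree - 1 : ℕ) : ℝ) *
          ∑ f ∈ (SF F m).filter (fun f => P ^ r ∣ f), z ^ Omega f := by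
        rw [Finset.sum_comm]
        apply Finset.sum_congr rfl
        intro P _
        rw [Finset.sum_comm]
        apply Finset.sum_congr rfl
        intro r _
        rw [Finset.mul_sum, Finset.sum_filter]
    _ ≤ ∑ P ∈ IF F m, ∑ r ∈ Finset.Icc 1 m, ((P.natDegree - 1 : ℕ) : ℝ) * h (P.natDegree - 1) r := by
        gcongr with P hP r hr
        exact sum_dvd_le hz hP
    _ = ∑ s ∈ Finset.Icc 1 m, ∑ P ∈ (IF F m).filter (fun P => P.natDegree - 1 = s),
          ∑ r ∈ Finset.Icc 1 m, ((P.natDegree - 1 : ℕ) : ℝ) * h (P.natDegree - 1) r := by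
        rw [Finset.sum_fiberwise_of_maps_to]
        intro P hP
        simp only [IF, Set.Finite.mem_toFinset, Set.mem_ofPred_eq] at hP
        rw [Finset.mem_Icc]
        omega
    _ = ∑ s ∈ Finset.Icc 1 m, ∑ r ∈ Finset.Icc 1 m,
          ((s * ((IF F m).filter (fun P => P.natDegree - 1 = s)).card : ℕ) : ℝ) * h s r := by
        apply Finset.sum_congr rfl
        intro s _
        rw [Finset.sum_comm]
        apply Finset.sum_congr rfl
        intro r _
        rw [Finset.sum_congr rfl (g := fun _ => (s : ℝ) * h s r)]
        · rw [Finset.sum_const, nsmul_eq_mul]; push_cast; ring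
        · intro P hP
          rw [(Finset.mem_filter.1 hP).2]
    _ ≤ ∑ s ∈ Finset.Icc 1 m, ∑ r ∈ Finset.Icc 1 m, (Fintype.card F : ℝ) ^ (s + 1) * h s r := by
        apply Finset.sum_le_sum
        intro s hs
        apply Finset.sum_le_sum
        intro r hr
        apply mul_le_mul_of_nonneg_right _ (hh0 s r)
        exact_mod_cast card_irr F m s (Finset.mem_Icc.1 hs).1
    _ = _ := by
        simp only [hh, mul_ite, mul_zero]

lemma aa_zero_le (F : Type*) [Field F] [Fintype F] (z : ℝ) : aa F z 0 ≤ 1 := by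
  have h : ∀ f ∈ SF F 0, f = 1 ∧ Omega f = 0 := by
    intro f hf
    simp only [SF, Set.Finite.mem_toFinset] at hf
    have h1 := SS_natDegree_le hf
    obtain ⟨h2, h3, h4⟩ := hf
    exact ⟨h2.natDegree_eq_zero.1 (by omega), by omega⟩
  have hsub : SF F 0 ⊆ {1} := fun f hf => Finset.mem_singleton.2 (h f hf).1
  rw [aa, Finset.sum_congr rfl (g := fun _ => (1 : ℝ)) (fun f hf => by rw [(h f hf).2, pow_zero])]
  have := Finset.card_le_card hsub
  simpa using this

lemma term_bound {q z τ : ℝ} (hz : 1 ≤ z) (hq : 0 < q) (hτ : 0 < τ) (hτ1 : τ < 1) (hτ2 : τ ^ 2 = z / q)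
    {s r : ℕ} (hs : 1 ≤ s) (hr : 1 ≤ r) :
    q ^ (s + 1) * z ^ r ≤ q ^ (s * r) * (q * z * ((if r = 1 then 1 else 0) + τ ^ (s * r))) := by
  rcases eq_or_ne r 1 with rfl | hr1
  · simp only [mul_one, if_true, pow_one]
    have : 0 ≤ q ^ s * (q * z * τ ^ s) := by positivity
    have e : q ^ s * (q * z * (1 + τ ^ s)) = q ^ (s + 1) * z + q ^ s * (q * z * τ ^ s) := by ring
    linarith
  · obtain ⟨t, rfl⟩ : ∃ t, r = t + 2 := ⟨r - 2, by omega⟩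
    rw [if_neg hr1, zero_add]
    have h1 : (τ ^ 2) ^ (s * (t + 1)) ≤ τ ^ (s * (t + 2)) := by
      rw [← pow_mul]
      apply pow_le_pow_of_le_one hτ.le hτ1.le
      nlinarith
    have h2 : q ^ (s * (t + 1)) * (τ ^ 2) ^ (s * (t + 1)) = z ^ (s * (t + 1)) := by
      rw [← mul_pow, hτ2]; congr 1; field_simp
    have h3 : z ^ (t + 1) ≤ z ^ (s * (t + 1)) := by
      apply pow_le_pow_right₀ hz; nlinarith
    calc q ^ (s + 1) * z ^ (t + 2) = q ^ s * (q * z) * z ^ (t + 1) := by ring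
      _ ≤ q ^ s * (q * z) * (q ^ (s * (t + 1)) * τ ^ (s * (t + 2))) := by
        gcongr
        rw [← h2] at h3
        exact h3.trans (by gcongr)
      _ = _ := by ring

lemma sum_mul_le (g : ℕ → ℝ) (hg : ∀ l, 0 ≤ g l) (M : ℕ) :
    ∑ s ∈ Finset.Icc 1 M, ∑ r ∈ Finset.Icc 1 M, (if s * r ≤ M then g (s * r) else 0) ≤
      ∑ l ∈ Finset.Icc 1 M, (l : ℝ) * g l := by
  calc _ ≤ ∑ s ∈ Finset.Icc 1 M, ∑ l ∈ Finset.Icc s M, g l := by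
        apply Finset.sum_le_sum
        intro s hs
        have hs1 := (Finset.mem_Icc.1 hs).1
        rw [← Finset.sum_filter]
        rw [← Finset.sum_image (s := (Finset.Icc 1 M).filter (fun r => s * r ≤ M)) 
          (g := fun r => s * r) (f := g)]
        · apply Finset.sum_le_sum_of_subset_of_nonneg
          · intro l hl
            simp only [Finset.mem_image, Finset.mem_filter, Finset.mem_Icc] at hl ⊢
            obtain ⟨r, ⟨⟨h1, h2⟩, h3⟩, rfl⟩ := hl
            exact ⟨Nat.le_mul_of_pos_right _ h1, h3⟩
          · intro l _ _; exact hg l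
        · intro a _ b _ hab
          exact Nat.eq_of_mul_eq_mul_left hs1 hab
    _ = ∑ l ∈ Finset.Icc 1 M, ∑ s ∈ Finset.Icc 1 l, g l := by
        apply Finset.sum_comm'
        intro s l
        simp only [Finset.mem_Icc]
        omega
    _ = _ := by simp

lemma aa_rec2 (F : Type*) [Field F] [Fintype F] {z τ : ℝ} (hz : 1 ≤ z) (hτ : 0 < τ) (hτ1 : τ < 1)
    (hτ2 : τ ^ 2 = z / (Fintype.card F : ℝ)) (M : ℕ) :
    (M : ℝ) * (aa F z M / (Fintype.card F : ℝ) ^ M) ≤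
      ∑ l ∈ Finset.Icc 1 M, (Fintype.card F * z + Fintype.card F * z * l * τ ^ l) *
        (aa F z (M - l) / (Fintype.card F : ℝ) ^ (M - l)) := by
  set q : ℝ := (Fintype.card F : ℝ) with hqdef
  have hq : 0 < q := by
    rw [hqdef]; exact_mod_cast Fintype.card_pos
  set A : ℕ → ℝ := fun m => aa F z m / q ^ m with hA
  have hA0 : ∀ m, 0 ≤ A m := fun m => div_nonneg (aa_nonneg F (by linarith) m) (by positivity)
  have hrec := aa_rec F (z := z) (by linarith) M
  rw [← hqdef] at hrec
  have haa : ∀ m, aa F z m = q ^ m * A m := by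
    intro m; simp only [hA]; field_simp
  have h1 : (M : ℝ) * A M ≤ ∑ s ∈ Finset.Icc 1 M, ∑ r ∈ Finset.Icc 1 M,
      if s * r ≤ M then q * z * ((if r = 1 then 1 else 0) + τ ^ (s * r)) * A (M - s * r) else 0 := by
    have hpos : 0 < q ^ M := by positivity
    refine le_of_mul_le_mul_left ?_ hpos
    calc q ^ M * (M * A M) = M * aa F z M := by rw [haa]; ring
      _ ≤ _ := hrec
      _ ≤ _ := by
        rw [Finset.mul_sum]
        apply Finset.sum_le_sum
        intro s hs
        rw [Finset.mul_sum]
        apply Finset.sum_le_sum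
        intro r hr
        split_ifs with hle h1
        all_goals try simp
        all_goals
          have hb := term_bound hz hq hτ hτ1 hτ2 (Finset.mem_Icc.1 hs).1 (Finset.mem_Icc.1 hr).1
          rw [haa]
          have e : q ^ M = q ^ (s * r) * q ^ (M - s * r) := by rw [← pow_add]; congr 1; omega
          have := mul_le_mul_of_nonneg_right hb
            (mul_nonneg (pow_nonneg hq.le (M - s * r)) (hA0 (M - s * r)))
          rw [e]
        · rw [if_pos h1] at this
          linarith
        · rw [if_neg h1, zero_add] at this
          linarith
  have hsplit : ∀ s ∈ Finset.Icc 1 M, ∀ r ∈ Finset.Icc 1 M,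
      (if s * r ≤ M then q * z * ((if r = 1 then 1 else 0) + τ ^ (s * r)) * A (M - s * r) else 0) =
      (if r = 1 then q * z * A (M - s) else 0) +
      (if s * r ≤ M then (q * z * τ ^ (s * r) * A (M - s * r)) else 0) := by
    intro s hs r hr
    rw [Finset.mem_Icc] at hs
    by_cases hr1 : r = 1
    · subst hr1
      simp only [mul_one, hs.2, if_true]; ring
    · simp [hr1]
  refine h1.trans ?_
  rw [Finset.sum_congr rfl (fun s hs => Finset.sum_congr rfl (hsplit s hs))]
  simp_rw [Finset.sum_add_distrib, add_mul]
  rw [Finset.sum_add_distrib]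
  apply add_le_add
  · apply Finset.sum_le_sum
    intro s hs
    rw [Finset.mem_Icc] at hs
    rw [Finset.sum_ite_eq', if_pos (Finset.mem_Icc.2 ⟨le_rfl, by omega⟩)]
  · refine (sum_mul_le (fun l => q * z * τ ^ l * A (M - l)) (fun l => ?_) M).trans (le_of_eq ?_)
    · have := hA0 (M - l); positivity
    · apply Finset.sum_congr rfl
      intro l _
      simp only [hA]; ring

lemma aa_bound (F : Type*) [Field F] [Fintype F] {z : ℝ} (hz : 1 ≤ z)
    (hzq : z < Fintype.card F) :
    ∃ K : ℝ, 0 ≤ K ∧ ∀ m : ℕ, 1 ≤ m → aa F z m ≤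
      K * (m : ℝ) ^ ((Fintype.card F : ℝ) * z - 1) * (Fintype.card F : ℝ) ^ m := by
  have hq2 : (2 : ℝ) ≤ Fintype.card F := by
    have := Fintype.one_lt_card (α := F)
    exact_mod_cast this
  have hq : (0 : ℝ) < Fintype.card F := by linarith
  set τ : ℝ := √(z / Fintype.card F) with hτdef
  have hx : 0 < z / (Fintype.card F : ℝ) := by positivity
  have hτ : 0 < τ := Real.sqrt_pos.2 hx
  have hτ2 : τ ^ 2 = z / (Fintype.card F : ℝ) := Real.sq_sqrt hx.le
  have hx1 : z / (Fintype.card F : ℝ) < 1 := (div_lt_one hq).2 hzq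
  have hτ1 : τ < 1 := by nlinarith
  set ρ : ℝ := √τ with hρdef
  have hρ : 0 < ρ := Real.sqrt_pos.2 hτ
  have hρ2 : ρ ^ 2 = τ := Real.sq_sqrt hτ.le
  have hρ1 : ρ < 1 := by nlinarith
  obtain ⟨b, hb⟩ := (tendsto_self_mul_const_pow_of_lt_one hρ.le hρ1).bddAbove_range
  have hb' : ∀ l : ℕ, (l : ℝ) * ρ ^ l ≤ |b| + 1 := fun l => by
    have h1 : (l : ℝ) * ρ ^ l ≤ b := hb ⟨l, rfl⟩
    have := le_abs_self b
    linarith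
  have hα : (2 : ℝ) ≤ Fintype.card F * z := by nlinarith
  obtain ⟨K, hK0, hK⟩ := analytic_bound (fun m => aa F z m / (Fintype.card F : ℝ) ^ m)
    (by simpa using aa_zero_le F z) (α := Fintype.card F * z)
    (c := Fintype.card F * z * (|b| + 1)) (ρ := ρ) hα (by positivity) hρ hρ1 (by
      intro m
      have h := aa_rec2 F hz hτ hτ1 hτ2 (m + 1)
      push_cast at h
      refine h.trans ?_
      rw [Finset.Nat.sum_antidiagonal_eq_sum_range_succ_mk, Finset.range_eq_Ico,
        ← Finset.Ico_add_one_right_eq_Icc]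
      rw [Finset.sum_Ico_eq_sum_range, ← Finset.range_eq_Ico]
      apply Finset.sum_le_sum
      intro l hl
      have e : m + 1 - (1 + l) = m - l := by omega
      rw [e]
      gcongr ?_ * _
      · exact div_nonneg (aa_nonneg F (by linarith) _) (by positivity)
      · have h1 := hb' (1 + l)
        have e2 : τ ^ (1 + l) = ρ ^ (1 + l) * ρ ^ (1 + l) := by rw [← hρ2]; ring
        rw [e2, add_comm l 1]
        have : ((Fintype.card F : ℝ) * z * ρ ^ (1 + l)) * (((1 + l : ℕ) : ℝ) * ρ ^ (1 + l)) ≤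
          ((Fintype.card F : ℝ) * z * ρ ^ (1 + l)) * (|b| + 1) := by gcongr
        linarith)
  refine ⟨K, hK0, fun m hm => ?_⟩
  have := hK m hm
  rwa [div_le_iff₀ (by positivity)] at this

lemma sum_Ncount_le (F : Type*) [Field F] [Fintype F] {z : ℝ} (hz : 0 ≤ z) (m : ℕ) (J : Finset ℕ) :
    ∑ j ∈ J, z ^ j * (Ncount' F (m + j) j : ℝ) ≤ aa F z m := by
  classical
  have h : ∀ j, Ncount' F (m + j) j = ((SF F m).filter fun f => Omega f = j).card := by
    intro j
    rw [Ncount', ← Set.ncard_coe_finset]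
    congr 1
    ext f
    simp only [Finset.coe_filter, SF, Set.Finite.mem_toFinset, SS, Set.mem_ofPred_eq]
    constructor
    · rintro ⟨h1, h2, h3, h4⟩
      exact ⟨⟨h1, h3, by omega⟩, h4⟩
    · rintro ⟨⟨h1, h2, h3⟩, h4⟩
      exact ⟨h1, by omega, h2, h4⟩
  calc _ = ∑ j ∈ J, ∑ f ∈ (SF F m).filter (fun f => Omega f = j), z ^ Omega f := by
        apply Finset.sum_congr rfl
        intro j _
        rw [h, Finset.sum_congr rfl (g := fun _ => z ^ j)
          (fun f hf => by rw [(Finset.mem_filter.1 hf).2])]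
        simp [mul_comm]
    _ = ∑ f ∈ (SF F m).filter (fun f => Omega f ∈ J), z ^ Omega f := by
        rw [← Finset.sum_fiberwise_of_maps_to (t := J) (g := fun f => Omega f)
          (fun f hf => (Finset.mem_filter.1 hf).2)]
        apply Finset.sum_congr rfl
        intro j hj
        apply Finset.sum_congr _ (fun _ _ => rfl)
        ext f
        simp only [Finset.mem_filter]
        constructor
        · rintro ⟨h1, rfl⟩; exact ⟨⟨h1, hj⟩, rfl⟩
        · rintro ⟨⟨h1, _⟩, h2⟩; exact ⟨h1, h2⟩
    _ ≤ _ := Finset.sum_le_sum_of_subset_of_nonneg (Finset.filter_subset _ _)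
        fun _ _ _ => by positivity

theorem stmt6 (q : ℕ) (hq : IsPrimePow q) (hq3 : 3 ≤ q)
    (F : Type*) [Field F] [Fintype F] (hF : Fintype.card F = q) (B : ℝ) (hB : 2 ≤ B) :
    ∃ C : ℝ, ∀ n : ℕ, 2 ≤ n → ∀ k : ℕ, 1 ≤ k → (k : ℝ) ≤ (n : ℝ) / B →
      (∑ j ∈ Finset.Ioc (Nat.floor (Real.exp 1 * q * Real.log ((n - k : ℕ) : ℝ))) k,
          (Nat.choose (q - 1 + k - j) (q - 1) * Ncount' F (n + j - k) j : ℝ)) ≤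
        C * (q : ℝ) ^ (n - k) * ((n - k : ℕ) : ℝ) ^ (q - 2) := by
  have hq3' : (3 : ℝ) ≤ q := by exact_mod_cast hq3
  have he1 : 1 ≤ Real.exp 1 := by have := Real.add_one_le_exp (1 : ℝ); linarith
  have heq : Real.exp 1 < Fintype.card F := by
    rw [hF]; have := Real.exp_one_lt_d9; linarith
  obtain ⟨K, hK0, hK⟩ := aa_bound F he1 heq
  rw [hF] at hK
  refine ⟨(q : ℝ) ^ (q - 1) * K, ?_⟩
  intro n hn k hk hkn
  have hkn2 : 2 * k ≤ n := by
    have h1 : (k : ℝ) * B ≤ n := (le_div_iff₀ (by linarith)).1 hkn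
    have : (2 : ℝ) * k ≤ n := by nlinarith [(Nat.cast_nonneg k : (0 : ℝ) ≤ k)]
    exact_mod_cast this
  obtain ⟨m, hm⟩ : ∃ m, n = m + k := ⟨n - k, by omega⟩
  subst hm
  have hkm : k ≤ m := by omega
  have hm1 : 1 ≤ m := by omega
  rw [Nat.add_sub_cancel]
  have hm0 : (0 : ℝ) < m := by exact_mod_cast hm1
  set x : ℝ := Real.exp 1 * q * Real.log (m : ℝ) with hx
  have hex : Real.exp x = (m : ℝ) ^ ((q : ℝ) * Real.exp 1) := by
    rw [Real.rpow_def_of_pos hm0, hx]; congr 1; ring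
  have hex0 : 0 < Real.exp x := Real.exp_pos x
  have hterm : ∀ j ∈ Finset.Ioc (Nat.floor x) k,
      (Nat.choose (q - 1 + k - j) (q - 1) * Ncount' F (m + k + j - k) j : ℝ) ≤
      ((q : ℝ) * m) ^ (q - 1) / Real.exp x * (Real.exp 1 ^ j * (Ncount' F (m + j) j : ℝ)) := by
    intro j hj
    rw [Finset.mem_Ioc] at hj
    have e : m + k + j - k = m + j := by omega
    rw [e]
    have h1 : Real.exp x ≤ Real.exp 1 ^ j := by
      rw [← Real.exp_nat_mul, mul_one]
      exact Real.exp_le_exp.2 (Nat.lt_of_floor_lt hj.1).le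
    have h2 : (Nat.choose (q - 1 + k - j) (q - 1) : ℝ) ≤ ((q : ℝ) * m) ^ (q - 1) := by
      have h3 : Nat.choose (q - 1 + k - j) (q - 1) ≤ (q * m) ^ (q - 1) := by
        refine (Nat.choose_le_pow _ _).trans (Nat.pow_le_pow_left ?_ _)
        obtain ⟨d, rfl⟩ : ∃ d, q = d + 1 := ⟨q - 1, by omega⟩
        have : d ≤ d * m := Nat.le_mul_of_pos_right _ hm1
        have : (d + 1) * m = d * m + m := by ring
        omega
      exact_mod_cast h3
    have h4 : 1 ≤ Real.exp 1 ^ j / Real.exp x := (one_le_div hex0).2 h1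
    have hN : (0 : ℝ) ≤ (Ncount' F (m + j) j : ℝ) := Nat.cast_nonneg _
    have hP : (0 : ℝ) ≤ ((q : ℝ) * m) ^ (q - 1) := by positivity
    calc _ ≤ ((q : ℝ) * m) ^ (q - 1) * (Ncount' F (m + j) j : ℝ) * 1 := by
          rw [mul_one]; gcongr
      _ ≤ ((q : ℝ) * m) ^ (q - 1) * (Ncount' F (m + j) j : ℝ) * (Real.exp 1 ^ j / Real.exp x) := by
          gcongr
      _ = _ := by ring
  refine (Finset.sum_le_sum hterm).trans ?_
  rw [← Finset.mul_sum]
  have hP : (0 : ℝ) ≤ ((q : ℝ) * m) ^ (q - 1) / Real.exp x := by positivity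
  refine (mul_le_mul_of_nonneg_left
    ((sum_Ncount_le F (Real.exp_pos 1).le m _).trans (hK m hm1)) hP).trans (le_of_eq ?_)
  rw [hex, Real.rpow_sub_one hm0.ne', mul_pow]
  have e : (m : ℝ) ^ (q - 1) = (m : ℝ) ^ (q - 2) * m := by
    rw [← pow_succ]; congr 1; omega
  rw [e]
  have : (0 : ℝ) < (m : ℝ) ^ ((q : ℝ) * Real.exp 1) := Real.rpow_pos_of_pos hm0 _
  field_simp
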